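/- Let R₀ > 0, δ ∈ ℝ, k ∈ ℕ with k ≥ 2, and 0 ≤ β ≤ 1, and define f(θ) = β cos(kθ) + √(1−β²) sin(kθ) and R_δ(θ) = R₀(1 + δ f(θ)). Then both first moments of the enclosed region vanish: ∫₀^{2π} R_δ(θ)³ cos(θ) dθ = 0 and ∫₀^{2π} R_δ(θ)³ sin(θ) dθ = 0. Hence the barycenter of the region enclosed by the polar curve r = R_δ(θ) is located at the origin. -/

import Mathlib

open Real in
/-- A continuous function on the circle that is invariant under a nontrivial rotation has vanishing
first Fourier coefficients. -/
theorem integral_mul_cos_sin_eq_zero_of_periodic {F : ℝ → ℝ} {p : ℝ} (hF : Continuous F)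
    (hp : Function.Periodic F p) (h2π : Function.Periodic F (2 * π)) (hcos : cos p ≠ 1) :
    (∫ θ in (0 : ℝ)..(2 * π), F θ * cos θ) = 0 ∧ (∫ θ in (0 : ℝ)..(2 * π), F θ * sin θ) = 0 := by
  have shift {g : ℝ → ℝ} (hg : Function.Periodic g (2 * π)) :
      (∫ θ in (0 : ℝ)..(2 * π), g (θ + p)) = ∫ θ in (0 : ℝ)..(2 * π), g θ := by
    rw [intervalIntegral.integral_comp_add_right, zero_add, add_comm (2 * π) p,
      hg.intervalIntegral_add_eq p 0, zero_add]
  have hc : IntervalIntegrable (fun θ ↦ F θ * cos θ) MeasureTheory.volume 0 (2 * π) :=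
    (hF.mul continuous_cos).intervalIntegrable _ _
  have hs : IntervalIntegrable (fun θ ↦ F θ * sin θ) MeasureTheory.volume 0 (2 * π) :=
    (hF.mul continuous_sin).intervalIntegrable _ _
  have hC := shift (h2π.mul cos_periodic)
  have hS := shift (h2π.mul sin_periodic)
  have eC (θ : ℝ) : (F * cos) (θ + p) = cos p * (F θ * cos θ) - sin p * (F θ * sin θ) := by
    rw [Pi.mul_apply, hp θ, cos_add]; ring
  have eS (θ : ℝ) : (F * sin) (θ + p) = cos p * (F θ * sin θ) + sin p * (F θ * cos θ) := by
    rw [Pi.mul_apply, hp θ, sin_add]; ring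
  simp only [eC] at hC
  simp only [eS] at hS
  rw [intervalIntegral.integral_sub (hc.const_mul _) (hs.const_mul _),
    intervalIntegral.integral_const_mul, intervalIntegral.integral_const_mul] at hC
  rw [intervalIntegral.integral_add (hs.const_mul _) (hc.const_mul _),
    intervalIntegral.integral_const_mul, intervalIntegral.integral_const_mul] at hS
  simp only [Pi.mul_apply] at hC hS
  generalize (∫ θ in (0 : ℝ)..(2 * π), F θ * cos θ) = C at hC hS ⊢
  generalize (∫ θ in (0 : ℝ)..(2 * π), F θ * sin θ) = S at hC hS ⊢
  have h1 : 1 - cos p ≠ 0 := sub_ne_zero.mpr hcos.symm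
  have hsq := sin_sq_add_cos_sq p
  constructor
  · refine (mul_eq_zero.mp ?_).resolve_left h1
    linear_combination (-(1 - cos p) / 2) * hC + sin p / 2 * hS - C / 2 * hsq
  · refine (mul_eq_zero.mp ?_).resolve_left h1
    linear_combination (-(1 - cos p) / 2) * hS - sin p / 2 * hC - S / 2 * hsq

open Real in
theorem cos_two_pi_div_nat_ne_one {k : ℕ} (hk : 2 ≤ k) : cos (2 * π / k) ≠ 1 := by
  have hk' : (2 : ℝ) ≤ k := by exact_mod_cast hk
  have hpos : 0 < 2 * π / k := by positivity
  have hle : 2 * π / k ≤ π := by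
    rw [div_le_iff₀ (by positivity)]
    nlinarith [pi_pos]
  intro h
  rw [cos_eq_one_iff_of_lt_of_lt (by linarith [pi_pos]) (by linarith [pi_pos])] at h
  exact hpos.ne' h


open Real in
/-- For the perturbed droplet interface
`R_δ(θ) = R₀ (1 + δ (β cos(kθ) + √(1−β²) sin(kθ)))` with `k ≥ 2` and `0 ≤ β ≤ 1`, both first
moments of the enclosed region vanish: `∫₀^{2π} R_δ³ cos θ dθ = 0` and
`∫₀^{2π} R_δ³ sin θ dθ = 0`; hence the barycenter of the enclosed region is at the origin. -/
theorem perturbed_droplet_barycenter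
    (R₀ δ β : ℝ) (hR₀ : 0 < R₀) (k : ℕ) (hk : 2 ≤ k)
    (hβ0 : 0 ≤ β) (hβ1 : β ≤ 1) :
    (∫ θ in (0 : ℝ)..(2 * π),
        (R₀ * (1 + δ * (β * cos (k * θ) + Real.sqrt (1 - β ^ 2) * sin (k * θ)))) ^ 3 * cos θ
      = 0)
    ∧ (∫ θ in (0 : ℝ)..(2 * π),
        (R₀ * (1 + δ * (β * cos (k * θ) + Real.sqrt (1 - β ^ 2) * sin (k * θ)))) ^ 3 * sin θ
      = 0) := by
  have hk0 : (k : ℝ) ≠ 0 := by positivity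
  refine integral_mul_cos_sin_eq_zero_of_periodic (p := 2 * π / k) (by fun_prop) (fun θ ↦ ?_)
    (fun θ ↦ ?_) (cos_two_pi_div_nat_ne_one hk)
  · simp only [mul_add, mul_div_cancel₀ _ hk0, cos_add_two_pi, sin_add_two_pi]
  · simp only [mul_add (k : ℝ), cos_add_nat_mul_two_pi, sin_add_nat_mul_two_pi]
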